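/- Let Σ_A(ℕ) be a topologically mixing, finitely primitive (BIP) countable Markov shift, f : Σ_A(ℕ) → ℝ satisfying the Walters condition with Var_1 f < ∞ and P(f) < ∞, and for β > 1 let μ_β be the Gibbs measure of βf. Then lim_{β→∞} P(βf)/β = m(f) and lim_{β→∞} ∫ f dμ_β = m(f). -/

import Mathlib

open Filter Topology MeasureTheory
open scoped ENNReal

/-- The countable Markov shift over alphabet ℕ determined by the 0-1 matrix `A`. -/
def MarkovShift (A : ℕ → ℕ → Bool) : Type :=
  {x : ℕ → ℕ // ∀ i, A (x i) (x (i + 1)) = true}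

namespace MarkovShift

variable {A : ℕ → ℕ → Bool}

instance : TopologicalSpace (MarkovShift A) :=
  instTopologicalSpaceSubtype

instance : MeasurableSpace (MarkovShift A) := borel _

instance : BorelSpace (MarkovShift A) := ⟨rfl⟩

/-- The shift map. -/
def shift (x : MarkovShift A) : MarkovShift A :=
  ⟨fun n => x.1 (n + 1), fun i => x.2 (i + 1)⟩

/-- The cylinder set determined by a finite word. -/
def cylinder (w : List ℕ) : Set (MarkovShift A) :=
  {x | ∀ i : Fin w.length, x.1 i = w.get i}

/-- The cylinder set determined by the first `m` coordinates of `x`. -/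
def cylOf (x : MarkovShift A) (m : ℕ) : Set (MarkovShift A) :=
  {y | ∀ i < m, y.1 i = x.1 i}

/-- A symbol is admissible when its cylinder is nonempty. -/
def Admissible (A : ℕ → ℕ → Bool) (a : ℕ) : Prop :=
  ∃ x : MarkovShift A, x.1 0 = a

/-- Topologically mixing. -/
def TopologicallyMixing (A : ℕ → ℕ → Bool) : Prop :=
  ∀ a b : ℕ, Admissible A a → Admissible A b →
    ∃ N : ℕ, ∀ n ≥ N, ∃ x : MarkovShift A, x.1 0 = a ∧ (shift^[n] x).1 0 = b

/-- Finitely primitive (BIP). -/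
def FinitelyPrimitive (A : ℕ → ℕ → Bool) : Prop :=
  ∃ (K₀ : ℕ) (F : Finset ℕ), ∀ a b : ℕ, Admissible A a → Admissible A b →
    ∃ w : List ℕ, w.length = K₀ ∧ (∀ c ∈ w, c ∈ F) ∧
      List.Chain' (fun u v => A u v = true) (a :: (w ++ [b]))

/-- First coordinate where two distinct points disagree. -/
noncomputable def firstDiff (x y : MarkovShift A) (h : x ≠ y) : ℕ :=
  Nat.find (Function.ne_iff.mp (fun hxy : x.1 = y.1 => h (Subtype.ext hxy)))

open Classical in
/-- The metric `d(x,y) = r^{t(x,y)}`. -/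
noncomputable def dist' (r : ℝ) (x y : MarkovShift A) : ℝ :=
  if h : x = y then 0 else r ^ firstDiff x y h

/-- Birkhoff sum `S_n f`. -/
def birkhoff (f : MarkovShift A → ℝ) (n : ℕ) (x : MarkovShift A) : ℝ :=
  ∑ j ∈ Finset.range n, f (shift^[j] x)

/-- The set of values `|S_n f x - S_n f y|` over pairs agreeing on the first `m` coordinates. -/
def varSet (f : MarkovShift A → ℝ) (n m : ℕ) : Set ℝ :=
  {c | ∃ x y : MarkovShift A, (∀ i < m, x.1 i = y.1 i) ∧ c = |birkhoff f n x - birkhoff f n y|}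

/-- `Var_m (S_n f)`. -/
noncomputable def varBirk (f : MarkovShift A → ℝ) (n m : ℕ) : ℝ := sSup (varSet f n m)

/-- `Var_1 f < ∞`. -/
def Var1Finite (f : MarkovShift A → ℝ) : Prop := BddAbove (varSet f 1 1)

/-- The set whose supremum is `sup_{n ≥ 1} Var_{n+k}(S_n f)`. -/
def waltersSet (f : MarkovShift A → ℝ) (k : ℕ) : Set ℝ :=
  {c | ∃ n, 1 ≤ n ∧ c ∈ varSet f n (n + k)}

/-- `M_k = sup_{n ≥ 1} Var_{n+k}(S_n f)`. -/
noncomputable def waltersSup (f : MarkovShift A → ℝ) (k : ℕ) : ℝ := sSup (waltersSet f k)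

/-- The Walters condition. -/
def SatisfiesWalters (f : MarkovShift A → ℝ) : Prop :=
  (∀ k, 1 ≤ k → BddAbove (waltersSet f k)) ∧
    Tendsto (fun k => waltersSup f k) atTop (𝓝 0)

/-- The partition function `Z_n(f,a) = Σ_{σ^n x = x, x₀ = a} e^{S_n f (x)}`. -/
noncomputable def partitionSum (f : MarkovShift A → ℝ) (n : ℕ) (a : ℕ) : ℝ :=
  ∑' x : {x : MarkovShift A // shift^[n] x = x ∧ x.1 0 = a}, Real.exp (birkhoff f n x.1)

/-- `f` has (finite) Gurevich pressure `p`. -/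
def HasGurevichPressure (f : MarkovShift A → ℝ) (p : ℝ) : Prop :=
  ∀ a : ℕ, Admissible A a →
    (∀ n, 1 ≤ n → Summable fun x : {x : MarkovShift A // shift^[n] x = x ∧ x.1 0 = a} =>
        Real.exp (birkhoff f n x.1)) ∧
    Tendsto (fun n : ℕ => (1 / (n : ℝ)) * Real.log (partitionSum f n a)) atTop (𝓝 p)

/-- σ-invariant Borel probability measure. -/
def IsInvariantProb (μ : Measure (MarkovShift A)) : Prop :=
  IsProbabilityMeasure μ ∧ μ.map shift = μ

/-- `m(f)`, the maximal ergodic average. -/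
noncomputable def mf (f : MarkovShift A → ℝ) : ℝ :=
  sSup {c | ∃ μ : Measure (MarkovShift A),
    IsInvariantProb μ ∧ Integrable f μ ∧ ∫ x, f x ∂μ = c}

/-- A maximizing measure for `f`. -/
def IsMaximizing (f : MarkovShift A → ℝ) (μ : Measure (MarkovShift A)) : Prop :=
  IsInvariantProb μ ∧ Integrable f μ ∧ ∫ x, f x ∂μ = mf f

/-- Bounded real valued function. -/
def BoundedFun (g : MarkovShift A → ℝ) : Prop := ∃ C, ∀ x, |g x| ≤ C

/-- A bounded calibrated sub-action for `f`. -/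
def IsCalibratedSubaction (f V : MarkovShift A → ℝ) : Prop :=
  Continuous V ∧ BoundedFun V ∧
    (∀ x, f x + V x - V (shift x) - mf f ≤ 0) ∧
    (∀ y, ∃ x, shift x = y ∧ f x + V x - V (shift x) - mf f = 0)

/-- The Ruelle transfer operator `(L_g u)(x) = Σ_{σ y = x} e^{g(y)} u(y)`. -/
noncomputable def ruelle (g u : MarkovShift A → ℝ) (x : MarkovShift A) : ℝ :=
  ∑' y : {y : MarkovShift A // shift y = x}, Real.exp (g y.1) * u y.1

/-- Ruelle-Perron-Frobenius data for the potential `f` with pressure `p`: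
eigenfunction `h`, eigenmeasure `ν`. -/
def IsRPF (f : MarkovShift A → ℝ) (p : ℝ) (h : MarkovShift A → ℝ)
    (ν : Measure (MarkovShift A)) : Prop :=
  Continuous h ∧ (∀ x, 0 < h x) ∧
    (∀ x, ruelle f h x = Real.exp p * h x) ∧
    IsProbabilityMeasure ν ∧
    (∀ g : MarkovShift A → ℝ, Continuous g → BoundedFun g →
      ∫ x, ruelle f g x ∂ν = Real.exp p * ∫ x, g x ∂ν) ∧
    ∫ x, h x ∂ν = 1

/-- The Gibbs measure `dμ = h dν`. -/
noncomputable def gibbs (h : MarkovShift A → ℝ) (ν : Measure (MarkovShift A)) :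
    Measure (MarkovShift A) :=
  ν.withDensity fun x => ENNReal.ofReal (h x)

/-- The Mañé potential `S_f(x,y)` (with respect to the metric of parameter `r`). -/
noncomputable def manePot (r : ℝ) (f : MarkovShift A → ℝ) (x y : MarkovShift A) : EReal :=
  ⨅ ε : {ε : ℝ // 0 < ε}, ⨆ n : {n : ℕ // 1 ≤ n},
    ⨆ _z : {z : MarkovShift A // dist' r x z < ε.1 ∧ shift^[n.1] z = y},
      ((birkhoff (fun w => f w - mf f) n.1 _z.1 : ℝ) : EReal)

/-- The (topological) support of a measure. -/
def msupport (μ : Measure (MarkovShift A)) : Set (MarkovShift A) :=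
  {x | ∀ U : Set (MarkovShift A), IsOpen U → x ∈ U → 0 < μ U}

end MarkovShift

/-!
For RPF data `(P(β), h, ν)` of `βf`, the potential `φ = βf - P(β) + log h - log h ∘ σ` is
normalized: its Ruelle operator fixes `1`, and in particular `φ ≤ 0`. Integrating `φ` against an
invariant measure kills the coboundary and gives `β ∫ f dμ ≤ P(β)`, hence `β m(f) ≤ P(β)`.
Conversely, the Gibbs measure `μ_β` is invariant under the dual of the normalized operator, so for
the normalized potential `φ'` of `β₀f` one has `∫ exp (φ' - φ) dμ_β = ∫ L_{φ'} 1 dμ_β = 1`; Jensen's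
inequality turns this into the tangent inequality
`P(β) - P(β₀) ≤ (β - β₀) ∫ f dμ_β ≤ (β - β₀) m(f)`. Dividing by `β` and by `β - β₀` squeezes both
quantities to `m(f)`.

Neither `log h` nor `f` is known to be integrable beforehand. A one-sided integrable bound on a
coboundary suffices: truncating `log h` keeps the integral of the coboundary equal to `0` and bounds
its `L¹` norm. The operators `L_{βf}`, `β ≥ 1`, are bounded because finite primitivity lets one
partition function, finite by hypothesis, control `∑ₐ exp (sup_{[a]} f)`.
-/

section Coboundary

theorem integrable_of_tendsto_of_integral_norm_le {α E : Type*} [MeasurableSpace α]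
    [NormedAddCommGroup E] {μ : Measure α} {F : ℕ → α → E} {f : α → E} {C : ℝ}
    (hF : ∀ n, Integrable (F n) μ) (hC : ∀ n, ∫ x, ‖F n x‖ ∂μ ≤ C)
    (hlim : ∀ᵐ x ∂μ, Tendsto (fun n => F n x) atTop (𝓝 (f x))) : Integrable f μ := by
  have hmeas : ∀ n, AEStronglyMeasurable (F n) μ := fun n => (hF n).1
  have hnorm : ∀ n, eLpNorm (F n) 1 μ ≤ ENNReal.ofReal C := fun n => by
    rw [eLpNorm_one_eq_lintegral_enorm, ← ofReal_integral_norm_eq_lintegral_enorm (hF n)]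
    exact ENNReal.ofReal_le_ofReal (hC n)
  refine memLp_one_iff_integrable.1 ⟨aestronglyMeasurable_of_tendsto_ae atTop hmeas hlim, ?_⟩
  calc eLpNorm f 1 μ ≤ liminf (fun n => eLpNorm (F n) 1 μ) atTop :=
        Lp.eLpNorm_lim_le_liminf_eLpNorm hmeas f hlim
    _ ≤ ENNReal.ofReal C := liminf_le_of_frequently_le' (Frequently.of_forall hnorm)
    _ < ∞ := ENNReal.ofReal_lt_top

/-- The truncation of a real number to the interval `[-k, k]`, which turns an arbitrary measurable
function into bounded ones without spoiling monotonicity or Lipschitz bounds. -/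
noncomputable def clamp (k : ℕ) (t : ℝ) : ℝ :=
  Set.projIcc (-k : ℝ) k (neg_le_self k.cast_nonneg) t

theorem abs_clamp_le (k : ℕ) (t : ℝ) : |clamp k t| ≤ k :=
  abs_le.2 (Set.projIcc (-k : ℝ) k _ t).2

theorem monotone_clamp (k : ℕ) : Monotone (clamp k) :=
  Set.monotone_projIcc _

theorem continuous_clamp (k : ℕ) : Continuous (clamp k) :=
  continuous_subtype_val.comp continuous_projIcc

theorem abs_clamp_sub_clamp_le (k : ℕ) (s t : ℝ) : |clamp k t - clamp k s| ≤ |t - s| :=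
  Set.abs_projIcc_sub_projIcc _

theorem tendsto_clamp (t : ℝ) : Tendsto (fun k => clamp k t) atTop (𝓝 t) := by
  obtain ⟨N, hN⟩ := exists_nat_ge |t|
  refine tendsto_const_nhds.congr' ?_
  filter_upwards [eventually_ge_atTop N] with k hk
  have ht : |t| ≤ k := hN.trans (Nat.cast_le.2 hk)
  rw [clamp, Set.projIcc_of_mem _ (abs_le.1 ht)]

theorem abs_clamp_sub_clamp_le_add (k : ℕ) {e s t : ℝ} (he : e ≤ t - s) :
    |clamp k t - clamp k s| ≤ clamp k t - clamp k s + 2 * |e| := by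
  rcases le_total s t with hst | hts
  · rw [abs_of_nonneg (sub_nonneg.2 (monotone_clamp k hst))]
    linarith [abs_nonneg e]
  · have hlip := abs_clamp_sub_clamp_le k s t
    rw [abs_of_nonpos (sub_nonpos.2 hts),
      abs_of_nonpos (sub_nonpos.2 (monotone_clamp k hts))] at hlip
    rw [abs_of_nonpos (sub_nonpos.2 (monotone_clamp k hts))]
    linarith [neg_abs_le e]

variable {α : Type*} [MeasurableSpace α] {μ : Measure α} [IsFiniteMeasure μ] {T : α → α}
  {u E : α → ℝ}

theorem integrable_clamp_comp (hu : AEStronglyMeasurable u μ) (k : ℕ) :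
    Integrable (fun x => clamp k (u x)) μ :=
  .of_bound ((continuous_clamp k).comp_aestronglyMeasurable hu) k
    (.of_forall fun x => abs_clamp_le k (u x))

theorem integral_clamp_coboundary (hT : MeasurePreserving T μ μ)
    (hu : AEStronglyMeasurable u μ) (k : ℕ) :
    ∫ x, (clamp k (u (T x)) - clamp k (u x)) ∂μ = 0 := by
  have hmap : ∫ x, clamp k (u x) ∂μ = ∫ x, clamp k (u (T x)) ∂μ := by
    conv_lhs => rw [← hT.map_eq]
    refine integral_map hT.aemeasurable ?_
    rw [hT.map_eq]
    exact (integrable_clamp_comp hu k).1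
  have hcomp : Integrable (fun x => clamp k (u (T x))) μ :=
    integrable_clamp_comp (hu.comp_measurePreserving hT) k
  rw [integral_sub hcomp (integrable_clamp_comp hu k), hmap, sub_self]

theorem integrable_coboundary_of_le (hT : MeasurePreserving T μ μ)
    (hu : AEStronglyMeasurable u μ) (hE : Integrable E μ)
    (hle : ∀ᵐ x ∂μ, E x ≤ u (T x) - u x) : Integrable (fun x => u (T x) - u x) μ := by
  have hint : ∀ k, Integrable (fun x => clamp k (u (T x)) - clamp k (u x)) μ := fun k =>
    (integrable_clamp_comp (hu.comp_measurePreserving hT) k).sub (integrable_clamp_comp hu k)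
  refine integrable_of_tendsto_of_integral_norm_le (C := ∫ x, 2 * |E x| ∂μ) hint (fun k => ?_)
    (.of_forall fun x => (tendsto_clamp _).sub (tendsto_clamp _))
  have hE' : Integrable (fun x => 2 * |E x|) μ := hE.abs.const_mul 2
  calc ∫ x, ‖clamp k (u (T x)) - clamp k (u x)‖ ∂μ
      ≤ ∫ x, (clamp k (u (T x)) - clamp k (u x) + 2 * |E x|) ∂μ :=
        integral_mono_ae (hint k).norm ((hint k).add hE')
          (hle.mono fun x hx => abs_clamp_sub_clamp_le_add k hx)
    _ = ∫ x, 2 * |E x| ∂μ := by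
        rw [integral_add (hint k) hE', integral_clamp_coboundary hT hu, zero_add]

theorem integral_coboundary_eq_zero (hT : MeasurePreserving T μ μ)
    (hu : AEStronglyMeasurable u μ) (hint : Integrable (fun x => u (T x) - u x) μ) :
    ∫ x, (u (T x) - u x) ∂μ = 0 := by
  have hlim := tendsto_integral_of_dominated_convergence
    (F := fun k x => clamp k (u (T x)) - clamp k (u x)) _
    (fun k => ((integrable_clamp_comp (hu.comp_measurePreserving hT) k).sub
      (integrable_clamp_comp hu k)).1)
    hint.abs (fun k => .of_forall fun x => abs_clamp_sub_clamp_le k _ _)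
    (.of_forall fun x => (tendsto_clamp _).sub (tendsto_clamp _))
  simp only [integral_clamp_coboundary hT hu] at hlim
  exact tendsto_nhds_unique hlim tendsto_const_nhds

theorem integral_nonpos_of_le_coboundary (hT : MeasurePreserving T μ μ)
    (hu : AEStronglyMeasurable u μ) (hE : Integrable E μ)
    (hle : ∀ᵐ x ∂μ, E x ≤ u (T x) - u x) : ∫ x, E x ∂μ ≤ 0 := by
  have hint := integrable_coboundary_of_le hT hu hE hle
  exact (integral_mono_ae hE hint hle).trans_eq (integral_coboundary_eq_zero hT hu hint)

end Coboundary

section Jensen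

theorem integrable_and_integral_le_of_lintegral_ofReal_le {α : Type*} [MeasurableSpace α]
    {μ : Measure α} {F : α → ℝ} {C : ℝ} (hF : AEStronglyMeasurable F μ) (hpos : 0 ≤ᵐ[μ] F)
    (hC : 0 ≤ C) (hle : ∫⁻ x, ENNReal.ofReal (F x) ∂μ ≤ ENNReal.ofReal C) :
    Integrable F μ ∧ ∫ x, F x ∂μ ≤ C := by
  refine ⟨⟨hF, (hasFiniteIntegral_iff_ofReal hpos).2 (hle.trans_lt ENNReal.ofReal_lt_top)⟩, ?_⟩
  rw [integral_eq_lintegral_of_nonneg_ae hpos hF]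
  exact ENNReal.toReal_le_of_le_ofReal hC hle

theorem integrable_and_le_integral_of_lintegral_exp_le_one {α : Type*} [MeasurableSpace α]
    {μ : Measure α} [IsProbabilityMeasure μ] {T : α → α} {u ψ : α → ℝ} {c C : ℝ}
    (hT : MeasurePreserving T μ μ) (hu : AEStronglyMeasurable u μ)
    (hψ : AEStronglyMeasurable ψ μ) (hC : ∀ᵐ x ∂μ, ψ x ≤ C)
    (hexp : ∫⁻ x, ENNReal.ofReal (Real.exp (c - ψ x - (u (T x) - u x))) ∂μ ≤ 1) :
    Integrable ψ μ ∧ c ≤ ∫ x, ψ x ∂μ := by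
  set D : α → ℝ := fun x => c - ψ x - (u (T x) - u x)
  have hDmeas : AEStronglyMeasurable D μ :=
    (aestronglyMeasurable_const.sub hψ).sub ((hu.comp_measurePreserving hT).sub hu)
  obtain ⟨hexp_int, hexp_le⟩ := integrable_and_integral_le_of_lintegral_ofReal_le
    (Real.continuous_exp.comp_aestronglyMeasurable hDmeas)
    (.of_forall fun x => (Real.exp_pos (D x)).le) zero_le_one (by simpa using hexp)
  have hDle : ∀ x, c - ψ x - (u (T x) - u x) ≤ Real.exp (D x) - 1 := fun x => by
    linarith [Real.add_one_le_exp (D x)]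
  have hbound : Integrable (fun x => Real.exp (D x) - 1) μ := hexp_int.sub (integrable_const 1)
  have hcob : Integrable (fun x => u (T x) - u x) μ := by
    refine integrable_coboundary_of_le (E := fun x => c - C - (Real.exp (D x) - 1)) hT hu
      ((integrable_const (c - C)).sub hbound) (hC.mono fun x hx => ?_)
    linarith [hDle x]
  have hdiff : Integrable (fun x => c - (u (T x) - u x)) μ := (integrable_const c).sub hcob
  have hlower : Integrable (fun x => c - (u (T x) - u x) - (Real.exp (D x) - 1)) μ :=
    hdiff.sub hbound
  have hlower_le : ∀ x, c - (u (T x) - u x) - (Real.exp (D x) - 1) ≤ ψ x := fun x => by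
    linarith [hDle x]
  have hψ_int : Integrable ψ μ :=
    integrable_of_le_of_le hψ (.of_forall hlower_le) hC hlower (integrable_const C)
  refine ⟨hψ_int, ?_⟩
  calc c ≤ ∫ x, (c - (u (T x) - u x) - (Real.exp (D x) - 1)) ∂μ := by
        rw [integral_sub hdiff hbound, integral_sub (integrable_const c) hcob,
          integral_coboundary_eq_zero hT hu hcob, integral_sub hexp_int (integrable_const 1)]
        simpa using hexp_le
    _ ≤ ∫ x, ψ x ∂μ := integral_mono hlower hψ_int hlower_le

end Jensen

section Limits

theorem tendsto_const_add_div_sub_atTop (m c b : ℝ) :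
    Tendsto (fun β : ℝ => m + c / (β - b)) atTop (𝓝 m) := by
  have hsub : Tendsto (fun β : ℝ => β - b) atTop atTop :=
    tendsto_atTop_add_const_right _ (-b) tendsto_id
  simpa using (tendsto_const_nhds (x := c).div_atTop hsub).const_add m

theorem tendsto_div_atTop_of_chord_le {P E : ℝ → ℝ} {m β₀ : ℝ}
    (hE : ∀ᶠ β in atTop, E β ≤ m) (hP : ∀ᶠ β in atTop, β * m ≤ P β)
    (hchord : ∀ᶠ β in atTop, P β - P β₀ ≤ (β - β₀) * E β) :
    Tendsto (fun β => P β / β) atTop (𝓝 m) := by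
  have hupper := tendsto_const_add_div_sub_atTop m (P β₀ - β₀ * m) 0
  refine tendsto_of_tendsto_of_tendsto_of_le_of_le' tendsto_const_nhds hupper ?_ ?_
  · filter_upwards [hP, eventually_gt_atTop 0] with β hP hβ
    rwa [le_div_iff₀ hβ, mul_comm]
  · filter_upwards [hE, hchord, eventually_gt_atTop β₀, eventually_gt_atTop 0]
      with β hE hchord hβ₀ hβ
    have hEm := mul_le_mul_of_nonneg_left hE (sub_pos.2 hβ₀).le
    rw [sub_zero, div_le_iff₀ hβ, add_mul, div_mul_cancel₀ _ hβ.ne']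
    linarith

theorem tendsto_slope_atTop_of_chord_le {P E : ℝ → ℝ} {m β₀ : ℝ}
    (hE : ∀ᶠ β in atTop, E β ≤ m) (hP : ∀ᶠ β in atTop, β * m ≤ P β)
    (hchord : ∀ᶠ β in atTop, P β - P β₀ ≤ (β - β₀) * E β) :
    Tendsto E atTop (𝓝 m) := by
  have hlower := tendsto_const_add_div_sub_atTop m (β₀ * m - P β₀) β₀
  refine tendsto_of_tendsto_of_tendsto_of_le_of_le' hlower tendsto_const_nhds ?_ hE
  filter_upwards [hP, hchord, eventually_gt_atTop β₀] with β hP hchord hβ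
  rw [← le_sub_iff_add_le', div_le_iff₀ (sub_pos.2 hβ)]
  linarith

end Limits

namespace MarkovShift

variable {A : ℕ → ℕ → Bool}

section Shift

instance : TopologicalSpace.MetrizableSpace (MarkovShift A) :=
  Topology.IsEmbedding.metrizableSpace (f := fun x : MarkovShift A => x.1) .subtypeVal

theorem continuous_coord (n : ℕ) : Continuous fun x : MarkovShift A => x.1 n :=
  (continuous_apply n).comp continuous_subtype_val

theorem continuous_shift : Continuous (shift : MarkovShift A → MarkovShift A) :=
  Continuous.subtype_mk (continuous_pi fun n => continuous_coord (n + 1)) _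

theorem shift_iterate_apply (n : ℕ) (x : MarkovShift A) (i : ℕ) :
    (shift^[n] x).1 i = x.1 (i + n) := by
  induction n generalizing x with
  | zero => rfl
  | succ n ih => exact (ih (shift x)).trans (congrArg x.1 (add_assoc i n 1))

theorem cylOf_mem_nhds (x : MarkovShift A) (m : ℕ) : cylOf x m ∈ 𝓝 x := by
  refine (Filter.eventually_all_finite (Set.finite_lt_nat m)).2 fun i _ => ?_
  exact (continuous_coord i).continuousAt.eventually ((isOpen_discrete {x.1 i}).mem_nhds rfl)

theorem IsInvariantProb.measurePreserving {μ : Measure (MarkovShift A)} (hμ : IsInvariantProb μ) :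
    MeasurePreserving shift μ μ :=
  ⟨continuous_shift.measurable, hμ.2⟩

theorem SatisfiesWalters.continuous {f : MarkovShift A → ℝ} (hf : SatisfiesWalters f) :
    Continuous f := by
  refine continuous_iff_continuousAt.2 fun x => Metric.tendsto_nhds.2 fun ε hε => ?_
  obtain ⟨k, hkε, hk⟩ := ((hf.2.eventually_lt_const hε).and (eventually_ge_atTop 1)).exists
  filter_upwards [cylOf_mem_nhds x (1 + k)] with y hy
  refine lt_of_le_of_lt (le_csSup (hf.1 k hk) ⟨1, le_rfl, y, x, hy, ?_⟩) hkε
  simp [birkhoff, Real.dist_eq]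

theorem Var1Finite.exists_abs_sub_le {f : MarkovShift A → ℝ} (hf : Var1Finite f) :
    ∃ V, ∀ x y : MarkovShift A, x.1 0 = y.1 0 → |f x - f y| ≤ V := by
  obtain ⟨V, hV⟩ := hf
  refine ⟨V, fun x y hxy => hV ⟨x, y, fun i hi => ?_, by simp [birkhoff]⟩⟩
  rwa [Nat.lt_one_iff.1 hi]

end Shift

section Fibre

/-- The inverse branch of the shift that prepends the symbol `b`. To make it a total function, it
is the identity where prepending `b` is not allowed. -/
def branch (b : ℕ) (x : MarkovShift A) : MarkovShift A :=
  ⟨fun n => if A b (x.1 0) = true then (if n = 0 then b else x.1 (n - 1)) else x.1 n, fun i => by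
    by_cases hb : A b (x.1 0) = true
    · cases i with
      | zero => simp [hb]
      | succ i => simpa [hb] using x.2 i
    · simpa [hb] using x.2 i⟩

theorem continuous_branch (b : ℕ) : Continuous (branch b : MarkovShift A → MarkovShift A) := by
  refine Continuous.subtype_mk (continuous_pi fun n => ?_) _
  have hcoord : Continuous fun x : MarkovShift A => (x.1 0, x.1 (n - 1), x.1 n) :=
    (continuous_coord 0).prodMk ((continuous_coord (n - 1)).prodMk (continuous_coord n))
  exact (continuous_of_discreteTopology (f := fun p : ℕ × ℕ × ℕ =>
    if A b p.1 = true then (if n = 0 then b else p.2.1) else p.2.2)).comp hcoord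

theorem branch_zero {b : ℕ} {x : MarkovShift A} (hb : A b (x.1 0) = true) :
    (branch b x).1 0 = b := by
  simp [branch, hb]

theorem shift_branch {b : ℕ} {x : MarkovShift A} (hb : A b (x.1 0) = true) :
    shift (branch b x) = x :=
  Subtype.ext <| funext fun n => by simp [shift, branch, hb]

theorem branch_shift (y : MarkovShift A) : branch (y.1 0) (shift y) = y := by
  have hy : A (y.1 0) ((shift y).1 0) = true := y.2 0
  refine Subtype.ext <| funext fun n => ?_
  cases n <;> exact if_pos hy

/-- A point of the fibre of the shift over `x` is determined by its first symbol. -/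
def fibreEquiv (x : MarkovShift A) :
    {b : ℕ | A b (x.1 0) = true} ≃ {y : MarkovShift A // shift y = x} where
  toFun b := ⟨branch b x, shift_branch b.2⟩
  invFun y := ⟨y.1.1 0, by obtain ⟨y, rfl⟩ := y; exact y.2 0⟩
  left_inv b := Subtype.ext (branch_zero b.2)
  right_inv := by
    rintro ⟨y, rfl⟩
    exact Subtype.ext (branch_shift y)

theorem injective_fibre_apply_zero (x : MarkovShift A) :
    Function.Injective fun y : {y : MarkovShift A // shift y = x} => y.1.1 0 :=
  Subtype.val_injective.comp (fibreEquiv x).symm.injective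

theorem measurableSet_admissible_branch (b : ℕ) :
    MeasurableSet {x : MarkovShift A | A b (x.1 0) = true} :=
  (continuous_coord 0).measurable (MeasurableSet.of_discrete (s := {a | A b a = true}))

theorem tsum_fibre_eq_tsum_branch (F : MarkovShift A → ℝ≥0∞) (x : MarkovShift A) :
    ∑' y : {y : MarkovShift A // shift y = x}, F y =
      ∑' b, {x : MarkovShift A | A b (x.1 0) = true}.indicator (fun x => F (branch b x)) x := by
  rw [← (fibreEquiv x).tsum_eq]
  exact tsum_subtype {b : ℕ | A b (x.1 0) = true} fun b => F (branch b x)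

theorem measurable_indicator_branch {F : MarkovShift A → ℝ≥0∞} (hF : Measurable F) (b : ℕ) :
    Measurable ({x : MarkovShift A | A b (x.1 0) = true}.indicator fun x => F (branch b x)) :=
  (hF.comp (continuous_branch b).measurable).indicator (measurableSet_admissible_branch b)

theorem measurable_tsum_fibre {F : MarkovShift A → ℝ≥0∞} (hF : Measurable F) :
    Measurable fun x => ∑' y : {y : MarkovShift A // shift y = x}, F y := by
  simp only [tsum_fibre_eq_tsum_branch]
  exact Measurable.tsum (measurable_indicator_branch hF)

/-- The pullback of `ν` along the shift: the measure obtained by integrating against `ν` the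
counting measures of the fibres. -/
noncomputable def fibreMeasure (ν : Measure (MarkovShift A)) : Measure (MarkovShift A) :=
  Measure.sum fun b => (ν.restrict {x | A b (x.1 0) = true}).map (branch b)

theorem lintegral_fibreMeasure (ν : Measure (MarkovShift A)) {F : MarkovShift A → ℝ≥0∞}
    (hF : Measurable F) :
    ∫⁻ y, F y ∂fibreMeasure ν =
      ∫⁻ x, ∑' y : {y : MarkovShift A // shift y = x}, F y ∂ν := by
  simp only [tsum_fibre_eq_tsum_branch]
  rw [fibreMeasure, lintegral_sum_measure,
    lintegral_tsum fun b => (measurable_indicator_branch hF b).aemeasurable]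
  refine tsum_congr fun b => ?_
  rw [lintegral_map hF (continuous_branch b).measurable,
    lintegral_indicator (measurableSet_admissible_branch b)]

end Fibre

section Transfer

variable {g u : MarkovShift A → ℝ} {G : MarkovShift A → ℝ≥0∞}

/-- The Ruelle operator on `[0, ∞]`-valued functions, where no summability is needed. -/
noncomputable def transfer (g : MarkovShift A → ℝ) (G : MarkovShift A → ℝ≥0∞)
    (x : MarkovShift A) : ℝ≥0∞ :=
  ∑' y : {y : MarkovShift A // shift y = x}, ENNReal.ofReal (Real.exp (g y)) * G y

theorem measurable_transfer (hg : Measurable g) (hG : Measurable G) :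
    Measurable (transfer g G) :=
  measurable_tsum_fibre (hg.exp.ennreal_ofReal.mul hG)

theorem transfer_comp_shift_mul (g : MarkovShift A → ℝ) (F G : MarkovShift A → ℝ≥0∞)
    (x : MarkovShift A) : transfer g (fun y => F (shift y) * G y) x = F x * transfer g G x := by
  rw [transfer, transfer, ← ENNReal.tsum_mul_left]
  refine tsum_congr fun y => ?_
  rw [y.2, mul_left_comm]

theorem transfer_mono {G' : MarkovShift A → ℝ≥0∞} (h : ∀ y, G y ≤ G' y) (x : MarkovShift A) :
    transfer g G x ≤ transfer g G' x :=
  ENNReal.tsum_le_tsum fun y => by gcongr; exact h y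

theorem transfer_const (g : MarkovShift A → ℝ) (c : ℝ≥0∞) (x : MarkovShift A) :
    transfer g (fun _ => c) x = c * transfer g 1 x := by
  simpa using transfer_comp_shift_mul g (fun _ => c) 1 x

theorem toReal_transfer_ofReal (g : MarkovShift A → ℝ) (hu : ∀ y, 0 ≤ u y) (x : MarkovShift A) :
    (transfer g (fun y => ENNReal.ofReal (u y)) x).toReal = ruelle g u x := by
  rw [transfer, ENNReal.tsum_toReal_eq fun y => by finiteness, ruelle]
  refine tsum_congr fun y => ?_
  rw [ENNReal.toReal_mul, ENNReal.toReal_ofReal (Real.exp_pos _).le, ENNReal.toReal_ofReal (hu y)]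

/-- The potential `g` is summable: `∑ₐ exp (sup_{[a]} g) < ∞`. The supremum over a cylinder, which
may be empty, is replaced by a summable majorant depending on the first symbol only. -/
def SummablePotential (g : MarkovShift A → ℝ) : Prop :=
  ∃ s : ℕ → ℝ, Summable s ∧ ∀ x : MarkovShift A, Real.exp (g x) ≤ s (x.1 0)

theorem SummablePotential.exists_le (hg : SummablePotential g) : ∃ C, ∀ x, g x ≤ C := by
  obtain ⟨s, hs, hle⟩ := hg
  refine ⟨∑' a, |s a|, fun x => ?_⟩
  calc g x ≤ Real.exp (g x) := by linarith [Real.add_one_le_exp (g x)]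
    _ ≤ |s (x.1 0)| := (hle x).trans (le_abs_self _)
    _ ≤ ∑' a, |s a| := hs.abs.le_tsum _ fun a _ => abs_nonneg _

theorem SummablePotential.const_mul (hg : SummablePotential g) {β : ℝ} (hβ : 1 ≤ β) :
    SummablePotential fun x => β * g x := by
  obtain ⟨C, hC⟩ := hg.exists_le
  obtain ⟨s, hs, hle⟩ := hg
  refine ⟨fun a => Real.exp ((β - 1) * C) * s a, hs.mul_left _, fun x => ?_⟩
  calc Real.exp (β * g x) = Real.exp ((β - 1) * g x) * Real.exp (g x) := by
        rw [← Real.exp_add]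
        ring_nf
    _ ≤ Real.exp ((β - 1) * C) * s (x.1 0) := by
        gcongr
        exacts [hC x, hle x]

theorem SummablePotential.exists_transfer_one_le (hg : SummablePotential g) :
    ∃ C, C ≠ ∞ ∧ ∀ x, transfer g 1 x ≤ C := by
  obtain ⟨s, hs, hle⟩ := hg
  refine ⟨∑' a, ENNReal.ofReal (s a), hs.tsum_ofReal_ne_top, fun x => ?_⟩
  calc transfer g 1 x
      ≤ ∑' y : {y : MarkovShift A // shift y = x}, ENNReal.ofReal (s (y.1.1 0)) :=
        ENNReal.tsum_le_tsum fun y => by simpa using ENNReal.ofReal_le_ofReal (hle y)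
    _ ≤ ∑' a, ENNReal.ofReal (s a) :=
        ENNReal.tsum_comp_le_tsum_of_injective (injective_fibre_apply_zero x) _

end Transfer

section RPF

variable {g h : MarkovShift A → ℝ} {G : MarkovShift A → ℝ≥0∞} {p : ℝ}
  {ν : Measure (MarkovShift A)}

theorem IsRPF.measurable (hR : IsRPF g p h ν) : Measurable h :=
  hR.1.measurable

theorem IsRPF.pos (hR : IsRPF g p h ν) (x : MarkovShift A) : 0 < h x :=
  hR.2.1 x

theorem IsRPF.isProbabilityMeasure (hR : IsRPF g p h ν) : IsProbabilityMeasure ν :=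
  hR.2.2.2.1

theorem lintegral_transfer_ne_top [IsFiniteMeasure ν] (hs : SummablePotential g) {M : ℝ≥0∞}
    (hM : M ≠ ∞) (hG : ∀ y, G y ≤ M) : ∫⁻ x, transfer g G x ∂ν ≠ ∞ := by
  obtain ⟨C, hC, hle⟩ := hs.exists_transfer_one_le
  have hbound : ∀ x, transfer g G x ≤ M * C := fun x =>
    calc transfer g G x ≤ transfer g (fun _ => M) x := transfer_mono hG x
      _ = M * transfer g 1 x := transfer_const g M x
      _ ≤ M * C := by gcongr; exact hle x
  refine ((lintegral_mono hbound).trans_lt ?_).ne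
  rw [lintegral_const]
  finiteness

theorem IsRPF.lintegral_transfer_of_boundedContinuous (hR : IsRPF g p h ν) (hg : Measurable g)
    (hs : SummablePotential g) (φ : BoundedContinuousFunction (MarkovShift A) NNReal) :
    ∫⁻ x, transfer g (fun y => φ y) x ∂ν =
      ENNReal.ofReal (Real.exp p) * ∫⁻ x, φ x ∂ν := by
  have := hR.isProbabilityMeasure
  have hφ : Measurable φ := φ.continuous.measurable
  have hbdd : ∀ x, (φ x : ℝ≥0∞) ≤ nndist 0 φ := fun x =>
    ENNReal.coe_le_coe.2 (φ.apply_le_nndist_zero x)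
  have hfin := lintegral_transfer_ne_top (ν := ν) hs ENNReal.coe_ne_top hbdd
  have hmeas : Measurable (transfer g fun y => φ y) :=
    measurable_transfer hg hφ.coe_nnreal_ennreal
  have hreal : ∫ x, ruelle g (fun y => φ y) x ∂ν = Real.exp p * ∫ x, (φ x : ℝ) ∂ν :=
    hR.2.2.2.2.1 _ (NNReal.continuous_coe.comp φ.continuous)
      ⟨nndist 0 φ, fun x => (NNReal.abs_eq _).trans_le (φ.apply_le_nndist_zero x)⟩
  have hruelle : ∀ x, ruelle g (fun y => φ y) x = (transfer g (fun y => φ y) x).toReal :=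
    fun x => by
      simpa using (toReal_transfer_ofReal g (u := fun y => φ y) (fun y => (φ y).2) x).symm
  simp only [hruelle] at hreal
  rw [integral_toReal hmeas.aemeasurable (ae_lt_top hmeas hfin),
    ← φ.toReal_lintegral_coe_eq_integral] at hreal
  rw [← ENNReal.toReal_eq_toReal_iff' hfin, hreal, ENNReal.toReal_mul,
    ENNReal.toReal_ofReal (Real.exp_pos p).le]
  exact ENNReal.mul_ne_top ENNReal.ofReal_ne_top (φ.lintegral_lt_top_of_nnreal ν).ne

theorem IsRPF.withDensity_fibreMeasure (hR : IsRPF g p h ν) (hg : Measurable g)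
    (hs : SummablePotential g) :
    (fibreMeasure ν).withDensity (fun y => ENNReal.ofReal (Real.exp (g y))) =
      ENNReal.ofReal (Real.exp p) • ν := by
  have := hR.isProbabilityMeasure
  have := ν.smul_finite (c := ENNReal.ofReal (Real.exp p)) ENNReal.ofReal_ne_top
  refine (ext_of_forall_lintegral_eq_of_IsFiniteMeasure fun φ => ?_).symm
  have hφ : Measurable fun x => (φ x : ℝ≥0∞) := φ.continuous.measurable.coe_nnreal_ennreal
  rw [lintegral_withDensity_eq_lintegral_mul _ hg.exp.ennreal_ofReal hφ,
    lintegral_fibreMeasure ν (hg.exp.ennreal_ofReal.mul hφ), lintegral_smul_measure, smul_eq_mul]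
  exact (hR.lintegral_transfer_of_boundedContinuous hg hs φ).symm

/-- The eigenmeasure identity, given for bounded continuous functions, extends to all measurable
functions because it identifies two finite Borel measures. -/
theorem IsRPF.lintegral_transfer (hR : IsRPF g p h ν) (hg : Measurable g)
    (hs : SummablePotential g) (hG : Measurable G) :
    ∫⁻ x, transfer g G x ∂ν = ENNReal.ofReal (Real.exp p) * ∫⁻ x, G x ∂ν := by
  have hmeas := hg.exp.ennreal_ofReal
  rw [← smul_eq_mul, ← lintegral_smul_measure, ← hR.withDensity_fibreMeasure hg hs,
    lintegral_withDensity_eq_lintegral_mul _ hmeas hG, lintegral_fibreMeasure ν (hmeas.mul hG)]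
  rfl

theorem IsRPF.transfer_eigenfunction (hR : IsRPF g p h ν) (x : MarkovShift A) :
    transfer g (fun y => ENNReal.ofReal (h y)) x = ENNReal.ofReal (Real.exp p * h x) := by
  have hreal : (transfer g (fun y => ENNReal.ofReal (h y)) x).toReal = Real.exp p * h x :=
    (toReal_transfer_ofReal g (fun y => (hR.pos y).le) x).trans (hR.2.2.1 x)
  have hpos : (transfer g (fun y => ENNReal.ofReal (h y)) x).toReal ≠ 0 :=
    hreal.trans_ne (mul_pos (Real.exp_pos p) (hR.pos x)).ne'
  rw [← hreal, ENNReal.ofReal_toReal (ENNReal.toReal_ne_zero.1 hpos).2]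

/-- The potential `g + log h - log h ∘ σ - p`, which is cohomologous to `g - p` and, for RPF data
`(p, h)` of `g`, normalized: its Ruelle operator fixes the constant `1`. -/
noncomputable def normalizedPotential (g : MarkovShift A → ℝ) (p : ℝ) (h : MarkovShift A → ℝ)
    (x : MarkovShift A) : ℝ :=
  g x - p - (Real.log (h (shift x)) - Real.log (h x))

theorem ofReal_exp_normalizedPotential (hpos : ∀ x, 0 < h x) (x : MarkovShift A) :
    ENNReal.ofReal (Real.exp p * h (shift x)) *
        ENNReal.ofReal (Real.exp (normalizedPotential g p h x)) =
      ENNReal.ofReal (Real.exp (g x)) * ENNReal.ofReal (h x) := by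
  rw [← ENNReal.ofReal_mul (mul_pos (Real.exp_pos p) (hpos _)).le,
    ← ENNReal.ofReal_mul (Real.exp_pos _).le, normalizedPotential, Real.exp_sub, Real.exp_sub,
    Real.exp_sub, Real.exp_log (hpos _), Real.exp_log (hpos _)]
  have := hpos x
  have := hpos (shift x)
  field_simp

theorem mul_transfer_normalizedPotential (hpos : ∀ x, 0 < h x) (x : MarkovShift A) :
    ENNReal.ofReal (Real.exp p * h x) * transfer (normalizedPotential g p h) G x =
      transfer g (fun y => ENNReal.ofReal (h y) * G y) x := by
  rw [transfer, transfer, ← ENNReal.tsum_mul_left]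
  refine tsum_congr fun y => ?_
  rw [← mul_assoc, ← mul_assoc, ← ofReal_exp_normalizedPotential hpos y, y.2]

theorem IsRPF.transfer_normalizedPotential_one (hR : IsRPF g p h ν) (x : MarkovShift A) :
    transfer (normalizedPotential g p h) 1 x = 1 := by
  have hpos := ENNReal.ofReal_pos.2 (mul_pos (Real.exp_pos p) (hR.pos x))
  refine (ENNReal.mul_right_inj hpos.ne' ENNReal.ofReal_ne_top).1 ?_
  rw [mul_transfer_normalizedPotential hR.pos]
  simpa using hR.transfer_eigenfunction x

theorem IsRPF.normalizedPotential_nonpos (hR : IsRPF g p h ν) (x : MarkovShift A) :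
    normalizedPotential g p h x ≤ 0 := by
  have hle : ENNReal.ofReal (Real.exp (normalizedPotential g p h x)) ≤ 1 := by
    rw [← hR.transfer_normalizedPotential_one (shift x)]
    simpa [transfer] using ENNReal.le_tsum
      (f := fun y : {y : MarkovShift A // shift y = shift x} =>
        ENNReal.ofReal (Real.exp (normalizedPotential g p h y))) ⟨x, rfl⟩
  rwa [ENNReal.ofReal_le_one, Real.exp_le_one_iff] at hle

theorem IsRPF.measurable_normalizedPotential (hR : IsRPF g p h ν) (hg : Measurable g) :
    Measurable (normalizedPotential g p h) :=
  (hg.sub_const p).sub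
    ((hR.measurable.comp continuous_shift.measurable).log.sub hR.measurable.log)

theorem IsRPF.lintegral_gibbs (hR : IsRPF g p h ν) (hG : Measurable G) :
    ∫⁻ x, G x ∂gibbs h ν = ∫⁻ x, ENNReal.ofReal (h x) * G x ∂ν :=
  lintegral_withDensity_eq_lintegral_mul ν hR.measurable.ennreal_ofReal hG

theorem IsRPF.lintegral_transfer_normalizedPotential (hR : IsRPF g p h ν) (hg : Measurable g)
    (hs : SummablePotential g) (hG : Measurable G) :
    ∫⁻ x, transfer (normalizedPotential g p h) G x ∂gibbs h ν = ∫⁻ x, G x ∂gibbs h ν := by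
  have hexp : ENNReal.ofReal (Real.exp p) ≠ 0 := (ENNReal.ofReal_pos.2 (Real.exp_pos p)).ne'
  have htransfer := measurable_transfer (hR.measurable_normalizedPotential hg) hG
  refine (ENNReal.mul_right_inj hexp ENNReal.ofReal_ne_top).1 ?_
  rw [hR.lintegral_gibbs htransfer, hR.lintegral_gibbs hG,
    ← lintegral_const_mul' _ _ ENNReal.ofReal_ne_top,
    ← hR.lintegral_transfer hg hs (G := fun y => ENNReal.ofReal (h y) * G y)
      (hR.measurable.ennreal_ofReal.mul hG)]
  refine lintegral_congr fun x => ?_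
  rw [← mul_assoc, ← ENNReal.ofReal_mul (Real.exp_pos p).le,
    mul_transfer_normalizedPotential hR.pos]

theorem IsRPF.isProbabilityMeasure_gibbs (hR : IsRPF g p h ν) :
    IsProbabilityMeasure (gibbs h ν) := by
  have hint : Integrable h ν := .of_integral_ne_zero (hR.2.2.2.2.2.trans_ne one_ne_zero)
  refine ⟨?_⟩
  rw [gibbs, withDensity_apply _ .univ, Measure.restrict_univ,
    ← ofReal_integral_eq_lintegral_ofReal hint (.of_forall fun x => (hR.pos x).le),
    hR.2.2.2.2.2, ENNReal.ofReal_one]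

theorem IsRPF.isInvariantProb_gibbs (hR : IsRPF g p h ν) (hg : Measurable g)
    (hs : SummablePotential g) : IsInvariantProb (gibbs h ν) := by
  refine ⟨hR.isProbabilityMeasure_gibbs, Measure.ext_of_lintegral _ fun F hF => ?_⟩
  have hcomp : Measurable fun y => F (shift y) := hF.comp continuous_shift.measurable
  have htransfer : ∀ x, transfer (normalizedPotential g p h) (fun y => F (shift y)) x = F x :=
    fun x => by
      simpa [hR.transfer_normalizedPotential_one] using
        transfer_comp_shift_mul (normalizedPotential g p h) F 1 x
  rw [lintegral_map hF continuous_shift.measurable,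
    ← hR.lintegral_transfer_normalizedPotential hg hs hcomp]
  exact lintegral_congr htransfer

end RPF

section Variational

variable {f g h h' : MarkovShift A → ℝ} {p p' : ℝ} {μ ν ν' : Measure (MarkovShift A)}

theorem IsRPF.integral_le_pressure (hR : IsRPF g p h ν) (hμ : IsInvariantProb μ)
    (hg : Integrable g μ) : ∫ x, g x ∂μ ≤ p := by
  have := hμ.1
  have hle : ∫ x, (g x - p) ∂μ ≤ 0 := by
    refine integral_nonpos_of_le_coboundary (u := fun x => Real.log (h x)) hμ.measurePreserving
      hR.measurable.log.aestronglyMeasurable (hg.sub (integrable_const p)) (.of_forall fun x => ?_)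
    exact sub_nonpos.1 (hR.normalizedPotential_nonpos x)
  rw [integral_sub hg (integrable_const p)] at hle
  simpa using hle

theorem IsRPF.lintegral_exp_normalizedPotential_sub (hR : IsRPF g p h ν) (hg : Measurable g)
    (hs : SummablePotential g) {φ : MarkovShift A → ℝ} (hφ : Measurable φ)
    (hone : ∀ x, transfer φ 1 x = 1) :
    ∫⁻ x, ENNReal.ofReal (Real.exp (φ x - normalizedPotential g p h x)) ∂gibbs h ν = 1 := by
  have := hR.isProbabilityMeasure_gibbs
  have hmeas : Measurable fun y =>
      ENNReal.ofReal (Real.exp (φ y - normalizedPotential g p h y)) :=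
    (hφ.sub (hR.measurable_normalizedPotential hg)).exp.ennreal_ofReal
  have htransfer : ∀ x, transfer (normalizedPotential g p h)
      (fun y => ENNReal.ofReal (Real.exp (φ y - normalizedPotential g p h y))) x = 1 := fun x => by
    rw [← hone x, transfer, transfer]
    refine tsum_congr fun y => ?_
    rw [← ENNReal.ofReal_mul (Real.exp_pos _).le, ← Real.exp_add, add_sub_cancel, Pi.one_apply,
      mul_one]
  rw [← hR.lintegral_transfer_normalizedPotential hg hs hmeas]
  simp [htransfer]

theorem IsRPF.integrable_and_pressure_sub_le {β β' : ℝ} (hR : IsRPF (fun x => β * f x) p h ν)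
    (hR' : IsRPF (fun x => β' * f x) p' h' ν') (hlt : β' < β) (hf : Measurable f)
    (hs : SummablePotential fun x => β * f x) {C : ℝ} (hC : ∀ x, f x ≤ C) :
    Integrable f (gibbs h ν) ∧ p - p' ≤ (β - β') * ∫ x, f x ∂gibbs h ν := by
  have := hR.isProbabilityMeasure_gibbs
  have hβ : 0 < β - β' := sub_pos.2 hlt
  have hexp := hR.lintegral_exp_normalizedPotential_sub (hf.const_mul β) hs
    (hR'.measurable_normalizedPotential (hf.const_mul β')) hR'.transfer_normalizedPotential_one
  have hle := integrable_and_le_integral_of_lintegral_exp_le_one (c := p - p')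
    (u := fun x => Real.log (h' x) - Real.log (h x)) (ψ := fun x => (β - β') * f x)
    (C := (β - β') * C)
    (hR.isInvariantProb_gibbs (hf.const_mul β) hs).measurePreserving
    (hR'.measurable.log.sub hR.measurable.log).aestronglyMeasurable
    (hf.const_mul _).aestronglyMeasurable
    (.of_forall fun x => mul_le_mul_of_nonneg_left (hC x) hβ.le)
    (hexp.le.trans' (lintegral_mono fun x => by
      refine ENNReal.ofReal_le_ofReal (Real.exp_le_exp.2 (le_of_eq ?_))
      simp only [normalizedPotential]
      ring))
  rwa [integrable_const_mul_iff (IsUnit.mk0 _ hβ.ne'), integral_const_mul] at hle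

theorem IsRPF.integral_le_pressure_div {β : ℝ} (hR : IsRPF (fun x => β * f x) p h ν) (hβ : 0 < β)
    (hμ : IsInvariantProb μ) (hf : Integrable f μ) : ∫ x, f x ∂μ ≤ p / β := by
  rw [le_div_iff₀' hβ, ← integral_const_mul]
  exact hR.integral_le_pressure hμ (hf.const_mul β)

theorem IsRPF.integral_le_mf {β : ℝ} (hR : IsRPF (fun x => β * f x) p h ν) (hβ : 0 < β)
    (hμ : IsInvariantProb μ) (hf : Integrable f μ) : ∫ x, f x ∂μ ≤ mf f := by
  refine le_csSup ⟨p / β, ?_⟩ ⟨μ, hμ, hf, rfl⟩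
  rintro _ ⟨μ', hμ', hf', rfl⟩
  exact hR.integral_le_pressure_div hβ hμ' hf'

theorem IsRPF.mul_mf_le {β : ℝ} (hR : IsRPF (fun x => β * f x) p h ν) (hβ : 0 < β)
    (hμ : IsInvariantProb μ) (hf : Integrable f μ) : β * mf f ≤ p := by
  rw [← le_div_iff₀' hβ]
  refine csSup_le ⟨_, μ, hμ, hf, rfl⟩ ?_
  rintro _ ⟨μ', hμ', hf', rfl⟩
  exact hR.integral_le_pressure_div hβ hμ' hf'

end Variational

section FinitePrimitivity

variable {f : MarkovShift A → ℝ}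

theorem exists_periodic_of_isChain {a : ℕ} {l : List ℕ}
    (hl : List.IsChain (fun u v => A u v = true) (a :: l ++ [a])) :
    ∃ z : MarkovShift A, shift^[l.length + 1] z = z ∧
      ∀ i (hi : i < (a :: l).length), z.1 i = (a :: l)[i] := by
  have hlt : ∀ i, i % (l.length + 1) < (a :: l).length := fun i =>
    Nat.mod_lt i l.length.succ_pos
  refine ⟨⟨fun i => (a :: l)[i % (l.length + 1)]'(hlt i), fun i => ?_⟩, ?_, fun i hi => ?_⟩
  · have hstep := List.isChain_iff_getElem.1 hl (i % (l.length + 1)) (by simpa using hlt i)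
    simp only [List.getElem_append_left (hlt i)] at hstep
    simp only [← Nat.mod_add_mod i (l.length + 1) 1]
    rcases (Nat.succ_le_of_lt (hlt i)).eq_or_lt with hlast | hmid
    · have hwrap : i % (l.length + 1) + 1 = l.length + 1 := hlast
      simpa [hwrap] using hstep
    · simp only [List.getElem_append_left hmid] at hstep
      simpa only [Nat.mod_eq_of_lt (show i % (l.length + 1) + 1 < l.length + 1 from hmid)]
        using hstep
  · exact Subtype.ext <| funext fun i => (shift_iterate_apply _ _ i).trans (by simp)
  · simp only [Nat.mod_eq_of_lt (show i < l.length + 1 from hi)]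

theorem FinitelyPrimitive.exists_periodic (hA : FinitelyPrimitive A) {a : ℕ}
    (ha : Admissible A a) :
    ∃ n k, k < n ∧ ∃ F : Set ℕ, F.Finite ∧ ∀ b, Admissible A b → ∃ z : MarkovShift A,
      shift^[n] z = z ∧ z.1 0 = a ∧ z.1 k = b ∧ ∀ j < n, j ≠ k → z.1 j ∈ F := by
  obtain ⟨K, F, hF⟩ := hA
  refine ⟨2 * K + 2, K + 1, by lia, insert a F, F.finite_toSet.insert a, fun b hb => ?_⟩
  obtain ⟨w, hw, hwF, hab⟩ := hF a b ha hb
  obtain ⟨v, hv, hvF, hba⟩ := hF b a hb ha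
  have hloop : List.IsChain (fun u v => A u v = true) (a :: (w ++ b :: v) ++ [a]) := by
    simpa using (List.isChain_split (l₁ := a :: w) (l₂ := v ++ [a])).2 ⟨hab, hba⟩
  obtain ⟨z, hz, hword⟩ := exists_periodic_of_isChain hloop
  have hlen : (w ++ b :: v).length + 1 = 2 * K + 2 := by simp; lia
  refine ⟨z, hlen ▸ hz, hword 0 (by simp), ?_, fun j hj hjK => ?_⟩
  · grind
  · grind

theorem Var1Finite.bddBelow_image (hf : Var1Finite f) {F : Set ℕ} (hF : F.Finite) :
    BddBelow (f '' {x | x.1 0 ∈ F}) := by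
  obtain ⟨V, hV⟩ := hf.exists_abs_sub_le
  have hcyl : ∀ a ∈ F, BddBelow (f '' {x | x.1 0 = a}) := fun a _ => by
    rcases Set.eq_empty_or_nonempty {x : MarkovShift A | x.1 0 = a} with hempty | ⟨y, rfl⟩
    · simp [hempty]
    · refine ⟨f y - V, ?_⟩
      rintro _ ⟨x, hx, rfl⟩
      linarith [(abs_le.1 (hV x y hx)).1]
  refine ((hF.bddBelow_biUnion).2 hcyl).mono ?_
  rintro _ ⟨x, hx, rfl⟩
  exact Set.mem_biUnion hx ⟨x, rfl, rfl⟩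

theorem add_nsmul_le_birkhoff {n k : ℕ} (hk : k < n) {B : ℝ} {z : MarkovShift A}
    (hB : ∀ j < n, j ≠ k → B ≤ f (shift^[j] z)) :
    f (shift^[k] z) + (n - 1) • B ≤ birkhoff f n z := by
  have hmem := Finset.mem_range.2 hk
  rw [birkhoff, ← Finset.add_sum_erase _ _ hmem, ← Finset.card_range n,
    ← Finset.card_erase_of_mem hmem, Finset.card_range]
  gcongr
  refine Finset.card_nsmul_le_sum _ _ _ fun j hj => ?_
  exact hB j (Finset.mem_range.1 (Finset.mem_of_mem_erase hj)) (Finset.ne_of_mem_erase hj)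

/-- Each symbol `b` is met by a periodic point whose period does not depend on `b` and whose other
symbols stay in a fixed finite set, so a single partition function controls every `sup_{[b]} f`. -/
theorem FinitelyPrimitive.summablePotential (hA : FinitelyPrimitive A) (hf : Var1Finite f) {p : ℝ}
    (hp : HasGurevichPressure f p) : SummablePotential f := by
  rcases isEmpty_or_nonempty (MarkovShift A) with hempty | ⟨⟨x₀⟩⟩
  · exact ⟨0, summable_zero, isEmptyElim⟩
  obtain ⟨n, k, hkn, F, hF, hz⟩ := hA.exists_periodic ⟨x₀, rfl⟩
  obtain ⟨V, hV⟩ := hf.exists_abs_sub_le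
  obtain ⟨B, hB⟩ := hf.bddBelow_image hF
  have : Nonempty (MarkovShift A) := ⟨x₀⟩
  choose! z hper hz₀ hzk hzF using hz
  have hle : ∀ y : MarkovShift A,
      f y ≤ V - (n - 1) • B + birkhoff f n (z (y.1 0)) := fun y => by
    have hb : Admissible A (y.1 0) := ⟨y, rfl⟩
    have hbirk := add_nsmul_le_birkhoff hkn (z := z (y.1 0)) fun j hj hjk =>
      hB ⟨_, by simpa [shift_iterate_apply] using hzF _ hb j hj hjk, rfl⟩
    have hyz := hV y (shift^[k] (z (y.1 0))) (by simp [shift_iterate_apply, hzk _ hb])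
    linarith [(abs_le.1 hyz).2]
  have hinj : Function.Injective fun b : {b // Admissible A b} =>
      (⟨z b, hper b b.2, hz₀ b b.2⟩ : {x // shift^[n] x = x ∧ x.1 0 = x₀.1 0}) :=
    fun b b' hbb' => Subtype.ext <| by
      have hzeq : z b = z b' := congrArg Subtype.val hbb'
      rw [← hzk b b.2, hzeq, hzk b' b'.2]
  have hsum := ((hp _ ⟨x₀, rfl⟩).1 n (by lia)).comp_injective hinj
  refine ⟨{b | Admissible A b}.indicator fun b =>
    Real.exp (V - (n - 1) • B) * Real.exp (birkhoff f n (z b)),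
    summable_subtype_iff_indicator.1 (hsum.mul_left _), fun y => ?_⟩
  rw [Set.indicator_of_mem (show y.1 0 ∈ {b | Admissible A b} from ⟨y, rfl⟩), ← Real.exp_add]
  exact Real.exp_le_exp.2 (hle y)

end FinitePrimitivity

theorem pressure_and_energy_limits_general {f : MarkovShift A → ℝ} (hf : Measurable f)
    (hs : SummablePotential f) {P : ℝ → ℝ} {h : ℝ → MarkovShift A → ℝ}
    {ν : ℝ → Measure (MarkovShift A)}
    (hRPF : ∀ᶠ β in atTop, IsRPF (fun x => β * f x) (P β) (h β) (ν β)) :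
    Tendsto (fun β : ℝ => P β / β) atTop (𝓝 (mf f)) ∧
      Tendsto (fun β : ℝ => ∫ x, f x ∂(gibbs (h β) (ν β))) atTop (𝓝 (mf f)) := by
  obtain ⟨β₀, hR⟩ := eventually_atTop.1 (hRPF.and (eventually_ge_atTop 1))
  obtain ⟨C, hC⟩ := hs.exists_le
  have hinv : ∀ β ≥ β₀, IsInvariantProb (gibbs (h β) (ν β)) := fun β hβ =>
    (hR β hβ).1.isInvariantProb_gibbs (hf.const_mul β) (hs.const_mul (hR β hβ).2)
  have hchord : ∀ β > β₀, Integrable f (gibbs (h β) (ν β)) ∧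
      P β - P β₀ ≤ (β - β₀) * ∫ x, f x ∂gibbs (h β) (ν β) := fun β hβ =>
    (hR β hβ.le).1.integrable_and_pressure_sub_le (hR β₀ le_rfl).1 hβ hf
      (hs.const_mul (hR β hβ.le).2) hC
  have hbounds : ∀ β > β₀, ∫ x, f x ∂gibbs (h β) (ν β) ≤ mf f ∧ β * mf f ≤ P β := fun β hβ =>
    have hpos : 0 < β := one_pos.trans_le (hR β hβ.le).2
    ⟨(hR β hβ.le).1.integral_le_mf hpos (hinv β hβ.le) (hchord β hβ).1,
      (hR β hβ.le).1.mul_mf_le hpos (hinv β hβ.le) (hchord β hβ).1⟩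
  have hlarge := eventually_gt_atTop β₀
  have hE := hlarge.mono fun β hβ => (hbounds β hβ).1
  have hP := hlarge.mono fun β hβ => (hbounds β hβ).2
  have hslope := hlarge.mono fun β hβ => (hchord β hβ).2
  exact ⟨tendsto_div_atTop_of_chord_le hE hP hslope, tendsto_slope_atTop_of_chord_le hE hP hslope⟩

end MarkovShift

namespace MarkovShift

/-- `P(βf)/β → m(f)` and `∫ f dμ_β → m(f)` as `β → ∞`. -/
theorem pressure_and_energy_limits
    (A : ℕ → ℕ → Bool)
    (hmix : TopologicallyMixing A)
    (hbip : FinitelyPrimitive A)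
    (f : MarkovShift A → ℝ)
    (hWalters : SatisfiesWalters f)
    (hVar1 : Var1Finite f)
    (P : ℝ → ℝ)
    (hPfin : HasGurevichPressure f (P 1))
    (h : ℝ → MarkovShift A → ℝ)
    (ν : ℝ → Measure (MarkovShift A))
    (hRPF : ∀ β : ℝ, 1 < β → IsRPF (fun x => β * f x) (P β) (h β) (ν β)) :
    Tendsto (fun β : ℝ => P β / β) atTop (𝓝 (mf f)) ∧
      Tendsto (fun β : ℝ => ∫ x, f x ∂(gibbs (h β) (ν β))) atTop (𝓝 (mf f)) := by
  exact pressure_and_energy_limits_general hWalters.continuous.measurable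
    (hbip.summablePotential hVar1 hPfin) ((eventually_gt_atTop 1).mono hRPF)

end MarkovShift
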